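/- For every fixed integer n ≥ 1, the sequence (r_{n,m})_{m≥1}, where r_{n,m} is the largest real root of A_{n,m}, is strictly decreasing in m and tends to −∞ as m → ∞. -/

import Mathlib

open Polynomial

noncomputable section

/-- The polylogarithm of negative integer order: `Li_{−n}(t) = ∑_{k=1}^∞ k^n t^k`
(the `k = 0` term vanishes for `n ≥ 1`). -/
def fbhLi (n : ℕ) (t : ℂ) : ℂ := ∑' k : ℕ, (k : ℂ) ^ n * t ^ k

/-- One differentiation step in the variable `s = 1 - t`. -/
def fbhStep (N : ℕ) (P : ℝ[X]) : ℝ[X] := C (N : ℝ) * P - X * derivative P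

/-- `fbhF n` is the numerator of `Li_{-n}`, in the variable `s = 1 - t`. -/
def fbhF : ℕ → ℝ[X]
  | 0 => 1
  | n + 1 => (1 - X) * fbhStep (n + 1) (fbhF n)

/-- `fbhB n m` is the numerator of the `m`-th derivative, in the variable `s = 1 - t`. -/
def fbhB (n : ℕ) : ℕ → ℝ[X]
  | 0 => fbhF n
  | m + 1 => fbhStep (n + m + 1) (fbhB n m)

lemma fbhStep_coeff (N : ℕ) (P : ℝ[X]) (k : ℕ) :
    (fbhStep N P).coeff k = ((N : ℝ) - k) * P.coeff k := by
  unfold fbhStep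
  cases k with
  | zero => simp
  | succ k =>
    rw [coeff_sub, coeff_C_mul, coeff_X_mul, coeff_derivative]
    push_cast
    ring

lemma fbhStep_natDegree (N n : ℕ) (P : ℝ[X]) (h : P.natDegree ≤ n) :
    (fbhStep N P).natDegree ≤ n := by
  rw [natDegree_le_iff_coeff_eq_zero]
  intro k hk
  rw [fbhStep_coeff, coeff_eq_zero_of_natDegree_lt (lt_of_le_of_lt h hk), mul_zero]

lemma fbhF_natDegree (n : ℕ) : (fbhF n).natDegree ≤ n := by
  induction n with
  | zero => simp [fbhF]
  | succ n ih =>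
    unfold fbhF
    refine natDegree_mul_le.trans ?_
    have h1 : (1 - X : ℝ[X]).natDegree ≤ 1 := by
      refine (natDegree_sub_le _ _).trans ?_
      simp
    have h2 := fbhStep_natDegree (n + 1) n _ ih
    omega

lemma fbhB_natDegree (n m : ℕ) : (fbhB n m).natDegree ≤ n := by
  induction m with
  | zero => exact fbhF_natDegree n
  | succ m ih => exact fbhStep_natDegree _ _ _ ih

lemma fbhF_coeff_zero (n : ℕ) : (fbhF n).coeff 0 ≠ 0 := by
  induction n with
  | zero => simp [fbhF]
  | succ n ih =>
    unfold fbhF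
    rw [mul_coeff_zero, fbhStep_coeff]
    have : ((n : ℝ) + 1) ≠ 0 := by positivity
    simp [ih, this]

lemma fbhB_coeff_zero (n m : ℕ) : (fbhB n m).coeff 0 ≠ 0 := by
  induction m with
  | zero => exact fbhF_coeff_zero n
  | succ m ih =>
    unfold fbhB
    rw [fbhStep_coeff]
    have : ((n : ℝ) + m + 1) ≠ 0 := by positivity
    simp [ih, this]

lemma fbh_hasDerivAt_real (N : ℕ) (P : ℝ[X]) (s : ℝ) (hs : s ≠ 0) :
    HasDerivAt (fun s : ℝ => P.eval s / s ^ N) (-(fbhStep N P).eval s / s ^ (N + 1)) s := by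
  have h := (P.hasDerivAt s).fun_div (hasDerivAt_pow N s) (pow_ne_zero N hs)
  refine h.congr_deriv ?_
  cases N with
  | zero => simp [fbhStep]; field_simp
  | succ N =>
    simp only [fbhStep, eval_sub, eval_mul, eval_C, eval_X, Nat.add_sub_cancel]
    field_simp
    ring

/-- Rolle on a bounded interval. -/
lemma fbh_rolle (N : ℕ) (P : ℝ[X]) (a b : ℝ) (ha : 1 ≤ a) (hab : a < b)
    (hPa : P.IsRoot a) (hPb : P.IsRoot b) :
    ∃ c, a < c ∧ c < b ∧ (fbhStep N P).IsRoot c := by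
  have hd : ∀ x ∈ Set.Icc a b, HasDerivAt (fun s : ℝ => P.eval s / s ^ N)
      (-(fbhStep N P).eval x / x ^ (N + 1)) x := fun x hx =>
    fbh_hasDerivAt_real N P x (by have := hx.1; intro h; linarith)
  obtain ⟨c, hc, h0⟩ := exists_hasDerivAt_eq_zero hab
    (fun x hx => (hd x hx).continuousAt.continuousWithinAt)
    (by simp [hPa.eq_zero, hPb.eq_zero]) (fun x hx => hd x ⟨hx.1.le, hx.2.le⟩)
  refine ⟨c, hc.1, hc.2, ?_⟩
  have hc0 : c ≠ 0 := by have := hc.1; intro h; linarith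
  simpa [hc0] using h0

/-- Rolle on an unbounded interval. -/
lemma fbh_rolle_top (N : ℕ) (P : ℝ[X]) (a : ℝ) (ha : 1 ≤ a) (hN : P.natDegree < N)
    (hPa : P.IsRoot a) :
    ∃ c, a < c ∧ (fbhStep N P).IsRoot c := by
  have ha0 : 0 < a := by linarith
  let f : ℝ → ℝ := fun s : ℝ => P.eval s / s ^ N
  have hlim : Filter.Tendsto f Filter.atTop (nhds 0) := by
    have := div_tendsto_zero_of_degree_lt P (X ^ N : ℝ[X]) (by
      rw [degree_X_pow]
      exact degree_le_natDegree.trans_lt (by exact_mod_cast hN))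
    simpa [f] using this
  have hd : ∀ u : ℝ, 0 < u → HasDerivAt (fun u => f u⁻¹)
      (-(fbhStep N P).eval u⁻¹ / u⁻¹ ^ (N + 1) * (-(u ^ 2)⁻¹)) u := fun u hu =>
    HasDerivAt.comp u (fbh_hasDerivAt_real N P u⁻¹ (by positivity)) (hasDerivAt_inv hu.ne')
  have hb : 0 < a⁻¹ := by positivity
  obtain ⟨c, hc, h0⟩ := exists_hasDerivAt_eq_zero' (f := fun u => f u⁻¹) (l := 0) hb
    (hlim.comp tendsto_inv_nhdsGT_zero)
    (by
      have h1 := (hd a⁻¹ hb).continuousAt.tendsto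
      have h2 : f a⁻¹⁻¹ = 0 := by simp [f, hPa.eq_zero]
      rw [h2] at h1
      exact h1.mono_left nhdsWithin_le_nhds)
    (fun u hu => hd u hu.1)
  refine ⟨c⁻¹, (lt_inv_comm₀ hc.1 ha0).1 hc.2 , ?_⟩
  have hc0 : c ≠ 0 := hc.1.ne'
  simpa [hc0] using h0

/-- `x 0 < x 1 < ... < x (n-1)` are roots of `P`, all at least `1`. -/
def fbhRoots (P : ℝ[X]) (n : ℕ) (x : ℕ → ℝ) : Prop :=
  (∀ i, i + 1 < n → x i < x (i + 1)) ∧ (∀ i, i < n → 1 ≤ x i ∧ P.IsRoot (x i))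

lemma fbhRoots_step (N n : ℕ) (P : ℝ[X]) (x : ℕ → ℝ) (hN : P.natDegree < N)
    (hx : fbhRoots P n x) :
    ∃ y, fbhRoots (fbhStep N P) n y ∧ ∀ i, i < n → x i < y i := by
  have : ∀ i, ∃ c, i < n → x i < c ∧ (i + 1 < n → c < x (i + 1)) ∧ (fbhStep N P).IsRoot c := by
    intro i
    by_cases hi : i + 1 < n
    · obtain ⟨c, h1, h2, h3⟩ := fbh_rolle N P (x i) (x (i + 1)) (hx.2 i (by omega)).1
        (hx.1 i hi) (hx.2 i (by omega)).2 (hx.2 _ hi).2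
      exact ⟨c, fun _ => ⟨h1, fun _ => h2, h3⟩⟩
    · by_cases hi' : i < n
      · obtain ⟨c, h1, h3⟩ := fbh_rolle_top N P (x i) (hx.2 i hi').1 hN (hx.2 i hi').2
        exact ⟨c, fun _ => ⟨h1, fun h => absurd h hi, h3⟩⟩
      · exact ⟨0, fun h => absurd h hi'⟩
  choose y hy using this
  refine ⟨y, ⟨fun i hi => ?_, fun i hi => ?_⟩, fun i hi => (hy i hi).1⟩
  · exact ((hy i (by omega)).2.1 hi).trans (hy (i + 1) hi).1
  · exact ⟨(hx.2 i hi).1.trans (hy i hi).1.le, (hy i hi).2.2⟩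

lemma fbhF_roots (n : ℕ) : ∃ x, fbhRoots (fbhF n) n x := by
  induction n with
  | zero => exact ⟨fun _ => 0, by simp [fbhRoots]⟩
  | succ n ih =>
    obtain ⟨x, hx⟩ := ih
    obtain ⟨y, hy, hxy⟩ := fbhRoots_step (n + 1) n _ x
      (Nat.lt_succ_of_le (fbhF_natDegree n)) hx
    refine ⟨fun i => Nat.casesOn i 1 y, ?_, ?_⟩
    · intro i hi
      cases i with
      | zero => exact (hx.2 0 (by omega)).1.trans_lt (hxy 0 (by omega))
      | succ i => exact hy.1 i (by omega)
    · intro i hi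
      cases i with
      | zero => simp [fbhF]
      | succ i =>
        refine ⟨(hy.2 i (by omega)).1, ?_⟩
        have := (hy.2 i (by omega)).2.eq_zero
        simp [fbhF, this]

lemma fbhB_roots (n m : ℕ) : ∃ x, fbhRoots (fbhB n m) n x := by
  induction m with
  | zero => exact fbhF_roots n
  | succ m ih =>
    obtain ⟨x, hx⟩ := ih
    obtain ⟨y, hy, -⟩ := fbhRoots_step (n + m + 1) n _ x
      (by have := fbhB_natDegree n m; omega) hx
    exact ⟨y, hy⟩

lemma fbhRoots_min (P : ℝ[X]) (n : ℕ) (x : ℕ → ℝ) (hP : P ≠ 0) (hd : P.natDegree ≤ n)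
    (hx : fbhRoots P n x) (s : ℝ) (hs : P.IsRoot s) : 0 < n ∧ x 0 ≤ s := by
  have hlt : ∀ i j, i < j → j < n → x i < x j := by
    intro i j hij
    induction j, hij using Nat.le_induction with
    | base => exact fun h => hx.1 i h
    | succ j hj ih => exact fun h => (ih (by omega)).trans (hx.1 j h)
  have hinj : Set.InjOn x (Finset.range n : Set ℕ) := by
    intro i hi j hj hij
    simp only [Finset.coe_range, Set.mem_Iio] at hi hj
    rcases lt_trichotomy i j with h | h | h
    · exact absurd hij (hlt i j h hj).ne
    · exact h
    · exact absurd hij (hlt j i h hi).ne'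
  have hsub : (Finset.range n).image x ⊆ P.roots.toFinset := by
    intro z hz
    simp only [Finset.mem_image, Finset.mem_range] at hz
    obtain ⟨i, hi, rfl⟩ := hz
    simpa [hP] using (hx.2 i hi).2
  have hcard : P.roots.toFinset.card ≤ ((Finset.range n).image x).card := by
    rw [Finset.card_image_of_injOn hinj, Finset.card_range]
    exact (Multiset.toFinset_card_le _).trans ((card_roots' P).trans hd)
  have heq := Finset.eq_of_subset_of_card_le hsub hcard
  have hmem : s ∈ (Finset.range n).image x := by
    rw [heq]
    simpa [hP] using hs
  simp only [Finset.mem_image, Finset.mem_range] at hmem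
  obtain ⟨i, hi, rfl⟩ := hmem
  refine ⟨by omega, ?_⟩
  rcases Nat.eq_zero_or_pos i with h | h
  · rw [h]
  · exact (hlt 0 i h hi).le

lemma fbhB_ne_zero (n m : ℕ) : fbhB n m ≠ 0 := fun h => fbhB_coeff_zero n m (by simp [h])

/-- Smallest roots strictly increase. -/
lemma fbhB_min_lt (n m : ℕ) (s s' : ℝ) (hs' : (fbhB n (m + 1)).IsRoot s')
    (hmin : ∀ x, (fbhB n m).IsRoot x → s ≤ x) : s < s' := by
  obtain ⟨x, hx⟩ := fbhB_roots n m
  obtain ⟨y, hy, hxy⟩ := fbhRoots_step (n + m + 1) n _ x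
      (by have := fbhB_natDegree n m; omega) hx
  obtain ⟨h0, h1⟩ := fbhRoots_min (fbhB n (m + 1)) n y (fbhB_ne_zero _ _) (fbhB_natDegree _ _)
    hy s' hs'
  exact ((hmin _ (hx.2 0 h0).2).trans_lt (hxy 0 h0)).trans_le h1

lemma fbhB_root_ge (n m : ℕ) (s : ℝ) (hs : (fbhB n m).IsRoot s) : 1 ≤ s := by
  obtain ⟨x, hx⟩ := fbhB_roots n m
  obtain ⟨h0, h1⟩ := fbhRoots_min (fbhB n m) n x (fbhB_ne_zero _ _) (fbhB_natDegree _ _) hx s hs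
  exact (hx.2 0 h0).1.trans h1

/-- Decay of the coefficients relative to the constant coefficient. -/
lemma fbhB_coeff_bound (n m k : ℕ) (hk : 1 ≤ k) (hkn : k ≤ n) :
    |(fbhB n m).coeff k| * (n + m) * |(fbhF n).coeff 0| ≤
      |(fbhB n m).coeff 0| * (|(fbhF n).coeff k| * n) := by
  induction m with
  | zero => simp [fbhB]; apply le_of_eq; ring
  | succ m ih =>
    unfold fbhB
    rw [fbhStep_coeff, fbhStep_coeff, abs_mul, abs_mul]
    have hk1 : (1 : ℝ) ≤ k := by exact_mod_cast hk
    have hk2 : (k : ℝ) ≤ n := by exact_mod_cast hkn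
    have hm : (0 : ℝ) ≤ m := by positivity
    push_cast
    rw [abs_of_nonneg (by linarith : (0 : ℝ) ≤ n + m + 1 - k),
      abs_of_nonneg (by linarith : (0 : ℝ) ≤ n + m + 1 - 0)]
    have h1 : ((n : ℝ) + m + 1 - k) * |(fbhB n m).coeff k| ≤ (n + m) * |(fbhB n m).coeff k| :=
      mul_le_mul_of_nonneg_right (by linarith) (abs_nonneg _)
    have h2 : (0 : ℝ) ≤ (n + m + 1) * |(fbhF n).coeff 0| := by positivity
    have h3 := mul_le_mul_of_nonneg_right h1 h2
    have h4 := mul_le_mul_of_nonneg_left ih (by linarith : (0 : ℝ) ≤ n + m + 1)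
    nlinarith [h3, h4]

/-- Roots bounded by `S` occur only for bounded `m`. -/
lemma fbhB_root_bound (n : ℕ) (S : ℝ) : ∃ K : ℝ, ∀ m s, (fbhB n m).IsRoot s → s ≤ S →
    (n : ℝ) + m ≤ K := by
  let c0 := |(fbhF n).coeff 0|
  have hc0 : 0 < c0 := abs_pos.2 (fbhF_coeff_zero n)
  let T := ∑ k ∈ Finset.range n, (|(fbhF n).coeff (k + 1)| * n) * S ^ (k + 1)
  refine ⟨T / c0, fun m s hs hsS => ?_⟩
  have hs1 := fbhB_root_ge n m s hs
  have he : (fbhB n m).eval s = 0 := hs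
  rw [eval_eq_sum_range' (Nat.lt_succ_of_le (fbhB_natDegree n m)), Finset.sum_range_succ'] at he
  simp only [pow_zero, mul_one] at he
  set b0 := (fbhB n m).coeff 0 with hb0
  have hb0pos : 0 < |b0| := abs_pos.2 (fbhB_coeff_zero n m)
  have h1 : |b0| ≤ ∑ k ∈ Finset.range n, |(fbhB n m).coeff (k + 1)| * S ^ (k + 1) := by
    have : b0 = -∑ k ∈ Finset.range n, (fbhB n m).coeff (k + 1) * s ^ (k + 1) := by linarith
    rw [this, abs_neg]
    refine (Finset.abs_sum_le_sum_abs _ _).trans (Finset.sum_le_sum fun k _ => ?_)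
    rw [abs_mul, abs_of_nonneg (by positivity : (0 : ℝ) ≤ s ^ (k + 1))]
    gcongr
  have h2 : |b0| * ((n + m) * c0) ≤ |b0| * T := by
    calc |b0| * ((n + m) * c0)
        ≤ (∑ k ∈ Finset.range n, |(fbhB n m).coeff (k + 1)| * S ^ (k + 1)) * ((n + m) * c0) := by
          gcongr
      _ ≤ |b0| * T := by
          rw [Finset.sum_mul, Finset.mul_sum]
          refine Finset.sum_le_sum fun k hk => ?_
          have := fbhB_coeff_bound n m (k + 1) (by omega) (by simpa using hk)
          have hS : (0 : ℝ) ≤ S ^ (k + 1) := by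
            have : 0 ≤ S := by linarith
            positivity
          have := mul_le_mul_of_nonneg_right this hS
          calc _ = |(fbhB n m).coeff (k + 1)| * (n + m) * c0 * S ^ (k + 1) := by ring
            _ ≤ _ := this
            _ = _ := by ring
  rw [le_div_iff₀ hc0]
  exact le_of_mul_le_mul_left h2 hb0pos

lemma fbh_hasDerivAt_complex (N : ℕ) (P : ℝ[X]) (t : ℂ) (ht : 1 - t ≠ 0) :
    HasDerivAt (fun t : ℂ => aeval (1 - t) P / (1 - t) ^ N)
      (aeval (1 - t) (fbhStep N P) / (1 - t) ^ (N + 1)) t := by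
  have h1 : HasDerivAt (fun t : ℂ => 1 - t) (-1) t := by
    simpa using (hasDerivAt_id t).const_sub 1
  have h2 : HasDerivAt (fun t : ℂ => aeval (1 - t) P) (aeval (1 - t) (derivative P) * (-1)) t :=
    HasDerivAt.comp t (P.hasDerivAt_aeval (1 - t)) h1
  have h := h2.fun_div (h1.fun_pow N) (pow_ne_zero N ht)
  refine h.congr_deriv ?_
  cases N with
  | zero => simp [fbhStep]; field_simp
  | succ N =>
    simp only [fbhStep, map_sub, map_mul, aeval_C, aeval_X, Nat.add_sub_cancel]
    simp only [Complex.coe_algebraMap]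
    push_cast
    field_simp
    ring

lemma fbh_one_sub_ne (t : ℂ) (ht : ‖t‖ < 1) : 1 - t ≠ 0 := by
  intro h
  have : t = 1 := (sub_eq_zero.1 h).symm
  rw [this] at ht
  simp at ht

lemma fbhLi_succ (n : ℕ) (t : ℂ) (ht : ‖t‖ < 1) :
    fbhLi (n + 1) t = t * deriv (fbhLi n) t := by
  obtain ⟨ρ, h1, h2⟩ := exists_between ht
  have hρ : 0 ≤ ρ := (norm_nonneg t).trans h1.le
  have hu : Summable (fun k : ℕ => (k : ℝ) ^ n * ρ ^ k) :=
    summable_pow_mul_geometric_of_norm_lt_one n (by rwa [Real.norm_of_nonneg hρ])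
  have h := Complex.hasSum_deriv_of_summable_norm
    (F := fun (k : ℕ) (w : ℂ) => (k : ℂ) ^ n * w ^ k) (U := Metric.ball 0 ρ) (z := t) hu
    (fun k => by fun_prop) Metric.isOpen_ball
    (fun k w hw => by
      have hw : ‖w‖ < ρ := by simpa using hw
      rw [norm_mul, norm_pow, norm_pow, Complex.norm_natCast]
      gcongr) (by simpa using h1)
  have h3 := h.mul_left t
  have h4 : deriv (fbhLi n) t = deriv (fun w : ℂ => ∑' k : ℕ, (k : ℂ) ^ n * w ^ k) t := rfl
  rw [h4, ← h3.tsum_eq]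
  unfold fbhLi
  refine tsum_congr fun k => ?_
  have h5 : deriv (fun w : ℂ => (k : ℂ) ^ n * w ^ k) t = (k : ℂ) ^ n * (k * t ^ (k - 1)) :=
    ((hasDerivAt_pow k t).const_mul _).deriv
  rw [h5]
  cases k with
  | zero => simp
  | succ k => simp only [Nat.add_sub_cancel]; ring

lemma fbh_eventually (t : ℂ) (ht : ‖t‖ < 1) : ∀ᶠ z in nhds t, ‖z‖ < 1 :=
  continuous_norm.continuousAt.eventually (gt_mem_nhds ht)

lemma fbhLi_eq (n : ℕ) : ∀ t : ℂ, ‖t‖ < 1 →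
    fbhLi n t = aeval (1 - t) (fbhF n) / (1 - t) ^ (n + 1) := by
  induction n with
  | zero =>
    intro t ht
    simp [fbhLi, fbhF, tsum_geometric_of_norm_lt_one ht]
  | succ n ih =>
    intro t ht
    have hd : deriv (fbhLi n) t = _ :=
      ((fbh_hasDerivAt_complex (n + 1) (fbhF n) t (fbh_one_sub_ne t ht)).congr_of_eventuallyEq
        ((fbh_eventually t ht).mono fun z hz => ih z hz)).deriv
    rw [fbhLi_succ n t ht, hd]
    simp only [fbhF, map_mul, map_sub, map_one, aeval_X]
    ring

lemma fbhLi_iteratedDeriv (n m : ℕ) : ∀ t : ℂ, ‖t‖ < 1 →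
    iteratedDeriv m (fbhLi n) t = aeval (1 - t) (fbhB n m) / (1 - t) ^ (n + m + 1) := by
  induction m with
  | zero =>
    intro t ht
    rw [iteratedDeriv_zero]
    exact fbhLi_eq n t ht
  | succ m ih =>
    intro t ht
    rw [iteratedDeriv_succ]
    exact ((fbh_hasDerivAt_complex (n + m + 1) (fbhB n m) t
      (fbh_one_sub_ne t ht)).congr_of_eventuallyEq
        ((fbh_eventually t ht).mono fun z hz => ih z hz)).deriv

lemma fbh_A_eq (n m : ℕ) (A : ℝ[X]) (hA : ∀ t : ℂ, ‖t‖ < 1 →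
      iteratedDeriv m (fbhLi n) t = Polynomial.aeval t A / (1 - t) ^ (n + m + 1)) :
    A = (fbhB n m).comp (1 - X) := by
  apply eq_of_infinite_eval_eq
  refine (Set.Ioo_infinite (show (0 : ℝ) < 1 by norm_num)).mono fun x hx => ?_
  have hx1 : ‖(x : ℂ)‖ < 1 := by
    rw [Complex.norm_real, Real.norm_of_nonneg hx.1.le]
    exact hx.2
  have h := (hA x hx1).symm.trans (fbhLi_iteratedDeriv n m x hx1)
  rw [div_left_inj' (pow_ne_zero _ (fbh_one_sub_ne _ hx1))] at h
  have e1 : aeval (x : ℂ) A = ((A.eval x : ℝ) : ℂ) := by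
    simpa using aeval_algebraMap_apply ℂ x A
  have e2 : aeval (1 - x : ℂ) (fbhB n m) = (((fbhB n m).eval (1 - x) : ℝ) : ℂ) := by
    simpa using aeval_algebraMap_apply ℂ (1 - x) (fbhB n m)
  rw [e1, e2] at h
  have h' : A.eval x = (fbhB n m).eval (1 - x) := by exact_mod_cast h
  simpa [eval_comp] using h'

/-- Fix `n ≥ 1`. Let `A m` be the polynomial `A_{n,m}` (the degree-`n` real polynomial
with `(d^m/dt^m) Li_{−n}(t) = A_{n,m}(t)/(1−t)^{n+m+1}` on the unit disk) and let
`r m` be its largest real root `r_{n,m}`. Then the sequence `(r m)_{m ≥ 1}` is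
strictly decreasing and tends to `−∞` as `m → ∞`. -/
theorem statement16 (n : ℕ) (hn : 1 ≤ n) (A : ℕ → Polynomial ℝ) (r : ℕ → ℝ)
    (hdeg : ∀ m, 1 ≤ m → (A m).natDegree = n)
    (hA : ∀ m, 1 ≤ m → ∀ t : ℂ, ‖t‖ < 1 →
      iteratedDeriv m (fbhLi n) t = Polynomial.aeval t (A m) / (1 - t) ^ (n + m + 1))
    (hr : ∀ m, 1 ≤ m → (A m).IsRoot (r m) ∧ ∀ x : ℝ, (A m).IsRoot x → x ≤ r m) :
    (∀ m, 1 ≤ m → r (m + 1) < r m) ∧ Filter.Tendsto r Filter.atTop Filter.atBot := by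
  have hroot : ∀ m, 1 ≤ m → ∀ x, (A m).IsRoot x ↔ (fbhB n m).IsRoot (1 - x) := by
    intro m hm x
    rw [fbh_A_eq n m (A m) (hA m hm)]
    simp [IsRoot, eval_comp]
  have h1 : ∀ m, 1 ≤ m → (fbhB n m).IsRoot (1 - r m) := fun m hm =>
    (hroot m hm _).1 (hr m hm).1
  refine ⟨fun m hm => ?_, ?_⟩
  · have := fbhB_min_lt n m (1 - r m) (1 - r (m + 1)) (h1 (m + 1) (by omega)) (fun x hx => by
      have := (hr m hm).2 (1 - x) ((hroot m hm _).2 (by simpa using hx))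
      linarith)
    linarith
  · rw [Filter.tendsto_atBot]
    intro b
    obtain ⟨K, hK⟩ := fbhB_root_bound n (1 - b)
    obtain ⟨M, hM⟩ := exists_nat_gt K
    filter_upwards [Filter.eventually_ge_atTop (M + 1)] with m hm
    by_contra hcon
    push Not at hcon
    have h2 := hK m (1 - r m) (h1 m (by omega)) (by linarith)
    have h3 : (M : ℝ) + 1 ≤ m := by exact_mod_cast hm
    have h4 : (0 : ℝ) ≤ n := by positivity
    linarith
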